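/- Suppose F is ε-approximately k-submodular with respect to f. Let x and o' be k-states with x ⪯ o', let e, u ∈ V satisfy x e = x u = 0 and o' e = o' u = 0, let i ∈ {1,…,k}, and assume the greedy-choice inequality Δ_{e,i}F(x) ≥ Δ_{u,i}F(x). Then 2·[((1+ε)/(1−ε))·f(x+(e,i)) − f(x)] ≥ f(o'+(u,i)) − f(o'+(e,i)). (This is Case 2 of the single-step inequality used in the ε-AS analysis of k-Greedy-IS, where the greedily selected pair (e,i) replaces the displaced optimal element u in the same dimension i.) -/

import Mathlib

/-!
Since `e` and `u` are both added to the same `x`, the greedy inequality says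
`F (x+(e,i)) ≥ F (x+(u,i))`, and the two-sided approximation turns this into
`(1+ε)/(1-ε) * f (x+(e,i)) ≥ f (x+(u,i))`. So the bracket on the left-hand side is at least the
marginal gain of `(u,i)` at `x`. That gain is nonnegative by monotonicity, and by diminishing
returns it is at least the gain at `o'`, which in turn is at least
`f (o'+(u,i)) - f (o'+(e,i))` by monotonicity.
-/

/-- The support of a `k`-state: elements assigned a nonzero value. -/
def supp {V : Type*} [Fintype V] {k : ℕ} [DecidableEq V] (x : V → Fin (k+1)) : Finset V :=
  Finset.univ.filter (fun e => x e ≠ 0)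

/-- The `i`-th support of a `k`-state: elements assigned value `i`. -/
def suppi {V : Type*} [Fintype V] {k : ℕ} [DecidableEq V] (x : V → Fin (k+1)) (i : Fin (k+1)) :
    Finset V :=
  Finset.univ.filter (fun e => x e = i)

/-- The partial order on `k`-states: `y` agrees with `x` on the support of `x`. -/
def kle {V : Type*} {k : ℕ} (x y : V → Fin (k+1)) : Prop :=
  ∀ e, x e ≠ 0 → y e = x e

/-- `kadd x e i` is the `k`-state agreeing with `x` except that `e` is assigned `i`. -/
def kadd {V : Type*} [DecidableEq V] {k : ℕ} (x : V → Fin (k+1)) (e : V) (i : Fin (k+1)) :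
    V → Fin (k+1) :=
  Function.update x e i

/-- The marginal gain `Δ_{e,i} g (x) = g(x + (e,i)) - g(x)`. -/
def marg {V : Type*} [DecidableEq V] {k : ℕ} (g : (V → Fin (k+1)) → ℝ) (e : V)
    (i : Fin (k+1)) (x : V → Fin (k+1)) : ℝ :=
  g (kadd x e i) - g x

/-- `f` is monotone and satisfies the diminishing returns property (monotone k-submodular). -/
def KSubmodular {V : Type*} [Fintype V] [DecidableEq V] {k : ℕ}
    (f : (V → Fin (k+1)) → ℝ) : Prop :=
  (∀ x y : V → Fin (k+1), kle x y → f x ≤ f y) ∧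
  (∀ x y : V → Fin (k+1), kle x y → ∀ e, e ∉ supp y → ∀ i : Fin (k+1), i ≠ 0 →
    marg f e i x ≥ marg f e i y)

/-- `F` is ε-approximately k-submodular (ε-AS) with respect to `f`. -/
def EpsAS {V : Type*} [Fintype V] [DecidableEq V] {k : ℕ} (ε : ℝ)
    (F f : (V → Fin (k+1)) → ℝ) : Prop :=
  (∀ x, 0 ≤ f x) ∧ KSubmodular f ∧ f (fun _ => (0 : Fin (k+1))) = 0 ∧
  (∀ x : V → Fin (k+1), (1 - ε) * f x ≤ F x ∧ F x ≤ (1 + ε) * f x)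

/-- `F` is ε-approximately diminishing returns (ε-ADR) with respect to `f`. -/
def EpsADR {V : Type*} [Fintype V] [DecidableEq V] {k : ℕ} (ε : ℝ)
    (F f : (V → Fin (k+1)) → ℝ) : Prop :=
  (∀ x, 0 ≤ f x) ∧ KSubmodular f ∧ f (fun _ => (0 : Fin (k+1))) = 0 ∧
  (∀ x : V → Fin (k+1), ∀ e, e ∉ supp x → ∀ i : Fin (k+1), i ≠ 0 →
    (1 - ε) * marg f e i x ≤ marg F e i x ∧ marg F e i x ≤ (1 + ε) * marg f e i x)

/-- A greedy TS sequence of length `B` for `G` (run of k-Greedy-TS on `G` with budget `B`). -/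
def GreedyTS {V : Type*} [Fintype V] [DecidableEq V] {k : ℕ}
    (G : (V → Fin (k+1)) → ℝ) (B : ℕ) (x : ℕ → V → Fin (k+1))
    (es : ℕ → V) (is : ℕ → Fin (k+1)) : Prop :=
  x 0 = (fun _ => (0 : Fin (k+1))) ∧
  ∀ j, 1 ≤ j → j ≤ B →
    es j ∉ supp (x (j-1)) ∧ is j ≠ 0 ∧
    x j = kadd (x (j-1)) (es j) (is j) ∧
    (∀ e, e ∉ supp (x (j-1)) → ∀ i : Fin (k+1), i ≠ 0 →
      marg G (es j) (is j) (x (j-1)) ≥ marg G e i (x (j-1)))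

/-- A greedy IS sequence for `G` with individual budgets `Bv` (run of k-Greedy-IS on `G`). -/
def GreedyIS {V : Type*} [Fintype V] [DecidableEq V] {k : ℕ}
    (G : (V → Fin (k+1)) → ℝ) (Bv : Fin (k+1) → ℕ) (B : ℕ) (x : ℕ → V → Fin (k+1))
    (es : ℕ → V) (is : ℕ → Fin (k+1)) : Prop :=
  x 0 = (fun _ => (0 : Fin (k+1))) ∧
  ∀ j, 1 ≤ j → j ≤ B →
    es j ∉ supp (x (j-1)) ∧ is j ≠ 0 ∧
    (suppi (x (j-1)) (is j)).card < Bv (is j) ∧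
    x j = kadd (x (j-1)) (es j) (is j) ∧
    (∀ e, e ∉ supp (x (j-1)) → ∀ i : Fin (k+1), i ≠ 0 →
      (suppi (x (j-1)) i).card < Bv i →
      marg G (es j) (is j) (x (j-1)) ≥ marg G e i (x (j-1)))

/-- Assigning a value to an unassigned element moves up in the partial order. -/
theorem kle_kadd {V : Type*} [DecidableEq V] {k : ℕ} (x : V → Fin (k+1)) (e : V)
    (i : Fin (k+1)) (hxe : x e = 0) : kle x (kadd x e i) := by
  intro v hv
  have hne : v ≠ e := by
    rintro rfl
    exact hv hxe
  simp [kadd, hne]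

/-- Case 2 single-step inequality in the ε-AS analysis of k-Greedy-IS. -/
theorem stmt11 {V : Type*} [Fintype V] [DecidableEq V] {k : ℕ} (hk : 1 ≤ k)
    (ε : ℝ) (hε0 : 0 < ε) (hε1 : ε < 1)
    (F f : (V → Fin (k+1)) → ℝ)
    (hAS : EpsAS ε F f)
    (x o' : V → Fin (k+1)) (hxo : kle x o')
    (e u : V) (hxe : x e = 0) (hxu : x u = 0) (hoe : o' e = 0) (hou : o' u = 0)
    (i : Fin (k+1)) (hi : i ≠ 0)
    (hgr : marg F e i x ≥ marg F u i x) :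
    2 * (((1 + ε) / (1 - ε)) * f (kadd x e i) - f x) ≥
      f (kadd o' u i) - f (kadd o' e i) := by
  obtain ⟨-, ⟨hmono, hdr⟩, -, happ⟩ := hAS
  have hpos : 0 < 1 - ε := by linarith
  have hratio : f (kadd x u i) ≤ (1 + ε) / (1 - ε) * f (kadd x e i) := by
    rw [div_mul_eq_mul_div, le_div_iff₀ hpos]
    have h₁ := (happ (kadd x u i)).1
    have h₂ := (happ (kadd x e i)).2
    unfold marg at hgr
    linarith
  have hgain := hdr x o' hxo u (by simp [supp, hou]) i hi
  have hxu_mono := hmono _ _ (kle_kadd x u i hxu)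
  have hoe_mono := hmono _ _ (kle_kadd o' e i hoe)
  unfold marg at hgain
  linarith
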